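/- For all a, b, c ∈ ℂ³ the commutation formula P∓(a,b) P̃(c) = P̃(c) P∓(b,a) holds; in particular P∓(a) P̃(b) = P̃(b) P∓(a) for all a, b ∈ ℂ³. -/

import Mathlib

/-! Multiplying out the blocks, both sides are block diagonal, and the diagonal blocks agree
precisely when `P₊(x) P₊(y) = P₋(y) P₋(x)`: with `(x, y) = (b, c)` in the upper block, and with
`(x, y) = (c, a)` in the lower one. This identity of 4×4 matrices, `Pplus_mul_Pplus`, is
`(P₊(x) P₊(y))ᵗ = P₊(x) P₊(y)` rewritten through `P₊(x)ᵗ = P₋(x)`, and it is checked entrywise. -/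

/- Commutation formula `P∓(a,b) P̃(c) = P̃(c) P∓(b,a)` for the 8×8 Dirac type matrices. -/

noncomputable section

open Matrix

/-- The 4×4 matrix `P₊(a)` with `P₊(a)(φ, v) = (a·v, φ a + a ∧ v)`. -/
def Pplus (a : Fin 3 → ℂ) : Matrix (Fin 4) (Fin 4) ℂ :=
  !![0,    a 0,   a 1,   a 2;
     a 0,  0,    -a 2,   a 1;
     a 1,  a 2,   0,    -a 0;
     a 2, -a 1,   a 0,   0]

/-- The 4×4 matrix `P₋(a)` with `P₋(a)(φ, v) = (a·v, φ a - a ∧ v)`. -/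
def Pminus (a : Fin 3 → ℂ) : Matrix (Fin 4) (Fin 4) ℂ :=
  !![0,    a 0,   a 1,   a 2;
     a 0,  0,     a 2,  -a 1;
     a 1, -a 2,   0,     a 0;
     a 2,  a 1,  -a 0,   0]

/-- The 8×8 block matrix `P̃(a,b) = [[0, P₋(b)], [P₊(a), 0]]`. -/
def Ptilde (a b : Fin 3 → ℂ) : Matrix (Fin 4 ⊕ Fin 4) (Fin 4 ⊕ Fin 4) ℂ :=
  Matrix.fromBlocks 0 (Pminus b) (Pplus a) 0

/-- The 8×8 block matrix `P∓(a,b) = [[0, P₊(b)], [P₋(a), 0]]`. -/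
def Pmp (a b : Fin 3 → ℂ) : Matrix (Fin 4 ⊕ Fin 4) (Fin 4 ⊕ Fin 4) ℂ :=
  Matrix.fromBlocks 0 (Pplus b) (Pminus a) 0

/-- Since `P₋(x) = P₊(x)ᵗ`, this says that the product `P₊(a) P₊(b)` is symmetric. -/
theorem Pplus_mul_Pplus (a b : Fin 3 → ℂ) : Pplus a * Pplus b = Pminus b * Pminus a := by
  ext i j
  fin_cases i <;> fin_cases j <;>
    simp [Pplus, Pminus, Matrix.mul_apply, Fin.sum_univ_four] <;> ring

/-- the commutation formula `P∓(a,b) P̃(c) = P̃(c) P∓(b,a)`; in particular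
`P∓(a) P̃(b) = P̃(b) P∓(a)`. -/
theorem dirac_matrix_commutation :
    (∀ a b c : Fin 3 → ℂ, Pmp a b * Ptilde c c = Ptilde c c * Pmp b a) ∧
    (∀ a b : Fin 3 → ℂ, Pmp a a * Ptilde b b = Ptilde b b * Pmp a a) := by
  have key : ∀ a b c : Fin 3 → ℂ, Pmp a b * Ptilde c c = Ptilde c c * Pmp b a := by
    intro a b c
    simp [Pmp, Ptilde, Matrix.fromBlocks_multiply, Pplus_mul_Pplus]
  exact ⟨key, fun a b => key a a b⟩

end
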